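/- arXiv:2112.15261 — 6 statements merged into one kernel-verified Lean document; each statement's English description precedes it below -/
import Mathlib

section
/- Let a_{21}, b_1, b_2 be real numbers with b_1 > 0, b_2 > 0, defining a 2-stage explicit Runge–Kutta method (a_{11} = a_{12} = a_{22} = 0, c_1 = 0, c_2 = a_{21}). Suppose the second-order conditions b_1 + b_2 = 1 and b_2·a_{21} = 1/2 hold, and suppose c̄_1 = c_1, where c̄_i = Σ_j ā_{ij} with adjoint coefficients ā_{ij} = b_j − b_j·a_{ji}/b_i. Then necessarily a_{21} = 1 and b_1 = b_2 = 1/2; moreover, for this method one additionally has c̄_2 = c_2. -/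
/-!
When `∑ j, b j = 1` and `b i ≠ 0`, the equation `c̄ i = c i` is Butcher's simplifying assumption
`D(1)`, namely `∑ j, b j * a j i = b i * (1 - c i)`. For an explicit two-stage method it reads
`b 1 * a 1 0 = b 0` at the first stage and `0 = b 1 * (1 - a 1 0)` at the second. The former and the
order conditions give `b 0 = 1 / 2`. Moreover, the order conditions imply
`∑ i, b i * (c̄ i - c i) = 0`, so `D(1)` at the first stage forces it at the second, whence
`a 1 0 = 1`.
-/

namespace RungeKutta

variable {ι K : Type*} [Fintype ι] [Field K]

/-- The abscissae `c i` of a Runge–Kutta method with coefficients `a`. -/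
def abscissa (a : ι → ι → K) (i : ι) : K :=
  ∑ j, a i j

/-- The coefficients `ā i j` of the symplectic partner of the Runge–Kutta method `(a, b)`, so that
`abscissa (adjointCoeff a b)` is `c̄`. They are meaningful only when all `b i` are nonzero. -/
def adjointCoeff (a : ι → ι → K) (b : ι → K) (i j : ι) : K :=
  b j - b j * a j i / b i

theorem abscissa_adjointCoeff (a : ι → ι → K) (b : ι → K) (i : ι) :
    abscissa (adjointCoeff a b) i = ∑ j, b j - (∑ j, b j * a j i) / b i := by
  simp only [abscissa, adjointCoeff, Finset.sum_sub_distrib, Finset.sum_div]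

theorem abscissa_adjointCoeff_eq_iff (a : ι → ι → K) {b : ι → K} {i : ι} (hi : b i ≠ 0) :
    abscissa (adjointCoeff a b) i = abscissa a i ↔
      ∑ j, b j * a j i = b i * (∑ j, b j - abscissa a i) := by
  rw [abscissa_adjointCoeff, sub_eq_iff_eq_add', ← sub_eq_iff_eq_add, eq_div_iff hi, mul_comm,
    eq_comm]

theorem sum_mul_abscissa_adjointCoeff (a : ι → ι → K) {b : ι → K} (hb : ∀ i, b i ≠ 0) :
    ∑ i, b i * abscissa (adjointCoeff a b) i = (∑ i, b i) ^ 2 - ∑ i, b i * abscissa a i := by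
  calc
    ∑ i, b i * abscissa (adjointCoeff a b) i
        = ∑ i, (b i * ∑ j, b j - ∑ j, b j * a j i) := by
      simp only [abscissa_adjointCoeff, mul_sub, mul_div_cancel₀ _ (hb _)]
    _ = (∑ i, b i) ^ 2 - ∑ i, ∑ j, b j * a j i := by
      rw [Finset.sum_sub_distrib, ← Finset.sum_mul, sq]
    _ = (∑ i, b i) ^ 2 - ∑ i, b i * abscissa a i := by
      rw [Finset.sum_comm]
      simp only [abscissa, Finset.mul_sum]

theorem abscissa_adjointCoeff_eq_of_forall_ne [NeZero (2 : K)] {a : ι → ι → K} {b : ι → K}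
    (hb : ∀ i, b i ≠ 0) (ord1 : ∑ i, b i = 1) (ord2 : ∑ i, b i * abscissa a i = 1 / 2) {k : ι}
    (h : ∀ i ≠ k, abscissa (adjointCoeff a b) i = abscissa a i) :
    abscissa (adjointCoeff a b) k = abscissa a k := by
  have weighted_sum : ∑ i, b i * (abscissa (adjointCoeff a b) i - abscissa a i) = 0 := by
    simp only [mul_sub, Finset.sum_sub_distrib]
    rw [sum_mul_abscissa_adjointCoeff a hb, ord1, ord2, one_pow, sub_half, sub_self]
  rw [Fintype.sum_eq_single k fun i hi ↦ by rw [h i hi, sub_self, mul_zero]] at weighted_sum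
  exact sub_eq_zero.mp ((mul_eq_zero.mp weighted_sum).resolve_left (hb k))

end RungeKutta

open RungeKutta in
theorem stmt_2_general {K : Type*} [Field K] [NeZero (2 : K)] (a : Fin 2 → Fin 2 → K)
    (b : Fin 2 → K) (hb : ∀ i, b i ≠ 0) (hexp : ∀ i j : Fin 2, i ≤ j → a i j = 0)
    (ord1 : b 0 + b 1 = 1) (ord2 : b 1 * a 1 0 = 1 / 2)
    (hceq : abscissa (adjointCoeff a b) 0 = abscissa a 0) :
    a 1 0 = 1 ∧ b 0 = 1 / 2 ∧ b 1 = 1 / 2 ∧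
      abscissa (adjointCoeff a b) 1 = abscissa a 1 := by
  have a00 : a 0 0 = 0 := hexp 0 0 le_rfl
  have a01 : a 0 1 = 0 := hexp 0 1 (Fin.zero_le 1)
  have a11 : a 1 1 = 0 := hexp 1 1 le_rfl
  have c0 : abscissa a 0 = 0 := by simp only [abscissa, Fin.sum_univ_two, a00, a01, add_zero]
  have c1 : abscissa a 1 = a 1 0 := by simp only [abscissa, Fin.sum_univ_two, a11, add_zero]
  have sum_b : ∑ i, b i = 1 := by rwa [Fin.sum_univ_two]
  have b0 : b 0 = 1 / 2 := by
    have D1 := (abscissa_adjointCoeff_eq_iff a (hb 0)).mp hceq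
    simpa [sum_b, c0, a00, ord2, eq_comm] using D1
  have b1 : b 1 = 1 / 2 := by rw [eq_sub_of_add_eq' ord1, b0, sub_half]
  have hceq' : abscissa (adjointCoeff a b) 1 = abscissa a 1 := by
    refine abscissa_adjointCoeff_eq_of_forall_ne hb sum_b ?_ ?_
    · rw [Fin.sum_univ_two, c0, c1, mul_zero, zero_add, ord2]
    · simpa [Fin.forall_fin_two] using hceq
  have a10 : a 1 0 = 1 := by
    have D1 := (abscissa_adjointCoeff_eq_iff a (hb 1)).mp hceq'
    have : 1 - a 1 0 = 0 := by simpa [sum_b, c1, a01, a11, hb 1] using D1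
    exact (sub_eq_zero.mp this).symm
  exact ⟨a10, b0, b1, hceq'⟩

/-- A 2-stage explicit Runge–Kutta method of second order whose first adjoint
abscissa satisfies `c̄_1 = c_1` must be the A method (Heun/explicit
trapezoidal): `a_{21} = 1`, `b_1 = b_2 = 1/2`; and then also `c̄_2 = c_2`. -/
theorem stmt_2 (a : Fin 2 → Fin 2 → ℝ) (b : Fin 2 → ℝ)
    (hb : ∀ i, 0 < b i)
    (hexp : ∀ i j : Fin 2, i ≤ j → a i j = 0)
    (c : Fin 2 → ℝ) (hc : ∀ i, c i = ∑ j, a i j)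
    (abar : Fin 2 → Fin 2 → ℝ)
    (habar : ∀ i j, abar i j = b j - b j * a j i / b i)
    (cbar : Fin 2 → ℝ) (hcbar : ∀ i, cbar i = ∑ j, abar i j)
    (ord1 : b 0 + b 1 = 1) (ord2 : b 1 * a 1 0 = 1 / 2)
    (hceq : cbar 0 = c 0) :
    a 1 0 = 1 ∧ b 0 = 1 / 2 ∧ b 1 = 1 / 2 ∧ cbar 1 = c 1 := by
  simp only [hcbar, hc, habar] at hceq ⊢
  exact stmt_2_general a b (fun i ↦ (hb i).ne') hexp ord1 ord2 hceq
end

section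
/- Let c_2 be a real number with c_2 ∉ {0, 1/3, 2/3, 1}, and define the 3-stage explicit Runge–Kutta coefficients a_{21} = c_2, a_{31} = (3c_2 − 1 − 3c_2²)/(c_2(2 − 3c_2)), a_{32} = (1 − c_2)/(c_2(2 − 3c_2)), all other a_{ij} = 0, b_1 = (c_2 − 1/3)/(2c_2), b_2 = 1/(6c_2(1 − c_2)), b_3 = (2 − 3c_2)/(6(1 − c_2)), and c_1 = 0, c_3 = 1. Then for every i ∈ {1,2,3}, Σ_{j=1}^3 b_j·a_{ji} = b_i·(1 − c_i); equivalently, c̄_i = c_i for every i whenever all b_i ≠ 0. -/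
/-!
Let `d j = ∑ i, b i * a i j - b j * (1 - c j)` be the defect in Butcher's condition `D(1)`.
The order conditions up to order three give `∑ j, d j = 1/2 - (1 - 1/2) = 0` and
`∑ j, d j * c j = 1/6 - (1/2 - 1/3) = 0`, while `d` vanishes at the last stage because nothing
depends on that stage and `c 2 = 1`. As `c 0 ≠ c 1`, the remaining `2 × 2` Vandermonde system
forces `d = 0`. Dividing `D(1)` by `b i` turns it into the equality of the abscissae of the method
and of its adjoint.
-/

open Matrix

/-- The coefficients of a Runge–Kutta method with stages indexed by `ι`: the matrix `a` and the
weights `b`. The abscissae are determined by `a`, see `ButcherTableau.c`. -/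
structure ButcherTableau (ι K : Type*) where
  a : Matrix ι ι K
  b : ι → K

namespace ButcherTableau

section CommRing

variable {ι K : Type*} [Fintype ι] [CommRing K]

/-- The abscissae of a Runge–Kutta method, i.e. the row sums of its coefficient matrix. -/
def c (T : ButcherTableau ι K) (i : ι) : K :=
  ∑ j, T.a i j

/-- The defect of a Runge–Kutta method in Butcher's simplifying assumption `D(1)`, which reads
`∑ i, b i * a i j = b j * (1 - c j)`. -/
def d1Defect (T : ButcherTableau ι K) : ι → K :=
  T.b ᵥ* T.a - T.b * (1 - T.c)

theorem a_mulVec_one (T : ButcherTableau ι K) : T.a *ᵥ 1 = T.c :=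
  funext fun i => dotProduct_one (T.a i)

theorem d1Defect_dotProduct (T : ButcherTableau ι K) (f : ι → K) :
    T.d1Defect ⬝ᵥ f = T.b ⬝ᵥ (T.a *ᵥ f) - T.b ⬝ᵥ ((1 - T.c) * f) := by
  rw [d1Defect, sub_dotProduct, ← dotProduct_mulVec]
  simp only [dotProduct, Pi.mul_apply, mul_assoc]

theorem d1Defect_eq_zero_of_col_eq_zero (T : ButcherTableau ι K) {j : ι}
    (ha : ∀ i, T.a i j = 0) (hc : T.c j = 1) : T.d1Defect j = 0 := by
  simp [d1Defect, vecMul, dotProduct, ha, hc]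

end CommRing

section Field

variable {ι K : Type*} [Fintype ι] [Field K]

/-- The adjoint (symplectic partner) of a Runge–Kutta method. It is meaningful only when no weight
vanishes, because `x / 0 = 0`. -/
def adjoint (T : ButcherTableau ι K) : ButcherTableau ι K where
  a i j := T.b j - T.b j * T.a j i / T.b i
  b := T.b

theorem adjoint_c_apply (T : ButcherTableau ι K) (i : ι) :
    T.adjoint.c i = ∑ j, T.b j - (T.b ᵥ* T.a) i / T.b i := by
  simp only [c, adjoint, Finset.sum_sub_distrib, ← Finset.sum_div, vecMul, dotProduct]

theorem adjoint_c_eq_c_iff (T : ButcherTableau ι K) (hsum : ∑ j, T.b j = 1) {i : ι}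
    (hb : T.b i ≠ 0) : T.adjoint.c i = T.c i ↔ T.d1Defect i = 0 := by
  rw [adjoint_c_apply, hsum, sub_eq_iff_eq_add', ← sub_eq_iff_eq_add, eq_comm, div_eq_iff hb,
    ← sub_eq_zero, mul_comm]
  rfl

/-- The four classical conditions for a Runge–Kutta method to have order at least three. -/
structure HasOrderThree (T : ButcherTableau ι K) : Prop where
  sum_b : ∑ i, T.b i = 1
  b_dotProduct_c : T.b ⬝ᵥ T.c = 1 / 2
  b_dotProduct_c_sq : T.b ⬝ᵥ T.c ^ 2 = 1 / 3
  b_dotProduct_a_mulVec_c : T.b ⬝ᵥ (T.a *ᵥ T.c) = 1 / 6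

variable [CharZero K]

theorem HasOrderThree.sum_d1Defect {T : ButcherTableau ι K} (hT : T.HasOrderThree) :
    ∑ j, T.d1Defect j = 0 := by
  rw [← dotProduct_one, d1Defect_dotProduct, a_mulVec_one, mul_one, dotProduct_sub, dotProduct_one,
    hT.sum_b, hT.b_dotProduct_c]
  norm_num

theorem HasOrderThree.d1Defect_dotProduct_c {T : ButcherTableau ι K} (hT : T.HasOrderThree) :
    T.d1Defect ⬝ᵥ T.c = 0 := by
  rw [d1Defect_dotProduct, sub_mul, one_mul, ← sq, dotProduct_sub, hT.b_dotProduct_a_mulVec_c,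
    hT.b_dotProduct_c, hT.b_dotProduct_c_sq]
  norm_num

theorem HasOrderThree.d1Defect_eq_zero {T : ButcherTableau (Fin 3) K} (hT : T.HasOrderThree)
    (ha : ∀ i, T.a i 2 = 0) (hc2 : T.c 2 = 1) (hc : T.c 0 ≠ T.c 1) : T.d1Defect = 0 := by
  have hd2 : T.d1Defect 2 = 0 := T.d1Defect_eq_zero_of_col_eq_zero ha hc2
  have hsum : T.d1Defect 0 + T.d1Defect 1 = 0 := by
    simpa [Fin.sum_univ_three, hd2] using hT.sum_d1Defect
  have hmoment : T.d1Defect 0 * T.c 0 + T.d1Defect 1 * T.c 1 = 0 := by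
    simpa [dotProduct, Fin.sum_univ_three, hd2] using hT.d1Defect_dotProduct_c
  have hd0 : T.d1Defect 0 = 0 := by
    refine (mul_eq_zero.mp ?_).resolve_right (sub_ne_zero.mpr hc)
    linear_combination hmoment - T.c 1 * hsum
  have hd1 : T.d1Defect 1 = 0 := by simpa [hd0] using hsum
  ext i
  fin_cases i <;> assumption

end Field

section OptimalControlThree

variable {K : Type*} [Field K]

/-- The general explicit 3-stage method of order three in optimal control, parametrized by the
abscissa `t` of its second stage. -/
@[simps]
def optimalControlThree (t : K) : ButcherTableau (Fin 3) K where
  a := !![0, 0, 0;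
          t, 0, 0;
          (3 * t - 1 - 3 * t ^ 2) / (t * (2 - 3 * t)), (1 - t) / (t * (2 - 3 * t)), 0]
  b := ![(t - 1 / 3) / (2 * t), 1 / (6 * t * (1 - t)), (2 - 3 * t) / (6 * (1 - t))]

theorem optimalControlThree_c {t : K} (h0 : t ≠ 0) (h23 : 2 - 3 * t ≠ 0) :
    (optimalControlThree t).c = ![0, t, 1] := by
  have hlast : (3 * t - 1 - 3 * t ^ 2) / (t * (2 - 3 * t)) + (1 - t) / (t * (2 - 3 * t)) = 1 := by
    rw [← add_div, div_eq_one_iff_eq (mul_ne_zero h0 h23)]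
    ring
  ext i
  fin_cases i <;> simp [c, optimalControlThree, Fin.sum_univ_three, hlast]

variable [CharZero K]

theorem optimalControlThree_hasOrderThree {t : K} (h0 : t ≠ 0) (h1 : 1 - t ≠ 0)
    (h23 : 2 - 3 * t ≠ 0) : (optimalControlThree t).HasOrderThree := by
  have hc := optimalControlThree_c h0 h23
  constructor
  case b_dotProduct_a_mulVec_c =>
    have hb3a32 : (2 - 3 * t) / (6 * (1 - t)) * ((1 - t) / (t * (2 - 3 * t)) * t) = 1 / 6 := by
      field_simp
    simpa [hc, mulVec, dotProduct, Fin.sum_univ_three] using hb3a32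
  all_goals
    simp only [hc, optimalControlThree_b, dotProduct, Fin.sum_univ_three, Pi.pow_apply, cons_val]
    field_simp
    ring

theorem optimalControlThree_d1Defect {t : K} (h0 : t ≠ 0) (h1 : 1 - t ≠ 0) (h23 : 2 - 3 * t ≠ 0) :
    (optimalControlThree t).d1Defect = 0 := by
  apply (optimalControlThree_hasOrderThree h0 h1 h23).d1Defect_eq_zero
  · intro i
    fin_cases i <;> rfl
  · simp [optimalControlThree_c h0 h23]
  · simpa [optimalControlThree_c h0 h23] using h0.symm

end OptimalControlThree

end ButcherTableau

open ButcherTableau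

theorem stmt_3_general {K : Type*} [Field K] [CharZero K] {t : K} (h0 : t ≠ 0) (h23 : t ≠ 2 / 3)
    (h1 : t ≠ 1) :
    let T := optimalControlThree t
    (∀ i, ∑ j, T.b j * T.a j i = T.b i * (1 - T.c i)) ∧
      ((∀ i, T.b i ≠ 0) → ∀ i, T.adjoint.c i = T.c i) := by
  have h1' : 1 - t ≠ 0 := sub_ne_zero.mpr h1.symm
  have h23' : 2 - 3 * t ≠ 0 := fun h => h23 (by linear_combination -h / 3)
  have hd := congrFun (optimalControlThree_d1Defect h0 h1' h23')
  have hsum := (optimalControlThree_hasOrderThree h0 h1' h23').sum_b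
  exact ⟨fun i => sub_eq_zero.mp (hd i), fun hb i => (adjoint_c_eq_c_iff _ hsum (hb i)).mpr (hd i)⟩

/-- The one-parameter family of 3-stage explicit Runge–Kutta methods of third
order in optimal control satisfies `Σ_j b_j·a_{ji} = b_i·(1 − c_i)` for every
`i`; equivalently `c̄_i = c_i` for every `i` whenever all `b_i ≠ 0`. -/
theorem stmt_3 (c2 : ℝ) (h0 : c2 ≠ 0) (h13 : c2 ≠ 1 / 3) (h23 : c2 ≠ 2 / 3)
    (h1 : c2 ≠ 1)
    (a : Fin 3 → Fin 3 → ℝ) (b c : Fin 3 → ℝ)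
    (ha21 : a 1 0 = c2)
    (ha31 : a 2 0 = (3 * c2 - 1 - 3 * c2 ^ 2) / (c2 * (2 - 3 * c2)))
    (ha32 : a 2 1 = (1 - c2) / (c2 * (2 - 3 * c2)))
    (hz : a 0 0 = 0 ∧ a 0 1 = 0 ∧ a 0 2 = 0 ∧ a 1 1 = 0 ∧ a 1 2 = 0 ∧ a 2 2 = 0)
    (hb1 : b 0 = (c2 - 1 / 3) / (2 * c2))
    (hb2 : b 1 = 1 / (6 * c2 * (1 - c2)))
    (hb3 : b 2 = (2 - 3 * c2) / (6 * (1 - c2)))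
    (hcdef : ∀ i, c i = ∑ j, a i j)
    (hc1 : c 0 = 0) (hc3 : c 2 = 1) :
    (∀ i, ∑ j, b j * a j i = b i * (1 - c i)) ∧
      ((∀ i, b i ≠ 0) → ∀ i, (∑ j, (b j - b j * a j i / b i)) = c i) := by
  obtain ⟨h00, h01, h02, h11, h12, h22⟩ := hz
  have hT : ⟨a, b⟩ = optimalControlThree c2 := by
    congr
    · ext i j
      fin_cases i <;> fin_cases j <;> assumption
    · ext i
      fin_cases i <;> assumption
  obtain rfl : c = (⟨a, b⟩ : ButcherTableau (Fin 3) ℝ).c := funext hcdef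
  have h := stmt_3_general h0 h23 h1
  rw [← hT] at h
  exact h
end

section
/- Let a_{ij}, b_i (1 ≤ i,j ≤ 4, a_{ij} = 0 for j ≥ i) be the coefficients of a 4-stage explicit Runge–Kutta method with all b_i ≠ 0, write c_i = Σ_j a_{ij} (so c_1 = 0), and assume the classical fourth-order conditions: Σ_i b_i = 1, Σ_i b_i c_i = 1/2, Σ_i b_i c_i² = 1/3, Σ_i b_i c_i³ = 1/4, Σ_{i,j} b_i a_{ij} c_j = 1/6, Σ_{i,j} b_i c_i a_{ij} c_j = 1/8, Σ_{i,j} b_i a_{ij} c_j² = 1/12, and Σ_{i,j,k} b_i a_{ij} a_{jk} c_k = 1/24. Then for every i ∈ {1,2,3,4}, Σ_{j=1}^4 b_j·a_{ji} = b_i·(1 − c_i). -/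
/-!
Measure the failure of the claimed identity by the vector `d = bᵀ a - b (1 - c)`, and that of the
simplifying assumption `C(2)` by `w = a c - c² / 2`. By the order conditions, `d` is orthogonal to
`1`, `c`, `c²` and `w`; moreover `b` and `b c` are orthogonal to `w`, and their pairings with `c`
and `c²` form the invertible matrix `!![1/2, 1/3; 1/3, 1/4]`. For an explicit method `w ≠ 0`, while
`c` and `w` vanish at the first stage, so `1`, `c`, `c²`, `w` are linearly independent. With four
stages they form a basis, whence `d = 0`.
-/

open Matrix

namespace RungeKutta

section LinearAlgebra

theorem mul_dotProduct_eq_dotProduct_mul {n R : Type*} [Fintype n] [NonUnitalSemiring R]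
    (u v w : n → R) : (u * v) ⬝ᵥ w = u ⬝ᵥ (v * w) := by
  simp only [dotProduct, Pi.mul_apply, mul_assoc]

theorem eq_zero_of_dotProduct_eq_zero_of_span_eq_top {n R : Type*} [Fintype n] [CommSemiring R]
    {s : Set (n → R)} (hs : Submodule.span R s = ⊤) {v : n → R} (hv : ∀ u ∈ s, v ⬝ᵥ u = 0) :
    v = 0 := by
  have hbilin : dotProductBilin R R v = 0 := LinearMap.ext_on hs hv
  exact dotProduct_eq_zero v (LinearMap.congr_fun hbilin)

end LinearAlgebra

section AdjointDefect

variable {ι R : Type*} [Fintype ι] [Ring R]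

/-- The defect of the simplifying assumption `D(1)`. When `∑ j, b j = 1` and `b i ≠ 0`, its `i`-th
entry over a field is `b i * (c i - e i)`, where `e` are the nodes of the adjoint method. -/
def adjointDefect (a : Matrix ι ι R) (b c : ι → R) : ι → R :=
  b ᵥ* a - b * (1 - c)

theorem adjointDefect_dotProduct {a : Matrix ι ι R} {b c : ι → R} (v : ι → R) :
    adjointDefect a b c ⬝ᵥ v = b ⬝ᵥ a *ᵥ v - b ⬝ᵥ v + b ⬝ᵥ (c * v) := by
  rw [adjointDefect, mul_sub, mul_one, sub_dotProduct, sub_dotProduct, dotProduct_mulVec,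
    mul_dotProduct_eq_dotProduct_mul, sub_add]

end AdjointDefect

variable {ι K : Type*} [Fintype ι] [Field K]

/-- The defect of the simplifying assumption `C(2)`, i.e. the error of the internal stages in
integrating a linear function. -/
def stageDefect (a : Matrix ι ι K) (c : ι → K) : ι → K :=
  a *ᵥ c - (2⁻¹ : K) • c ^ 2

variable {a : Matrix ι ι K} {b c : ι → K}

theorem dotProduct_stageDefect (v : ι → K) :
    v ⬝ᵥ stageDefect a c = v ⬝ᵥ a *ᵥ c - 2⁻¹ * (v ⬝ᵥ c ^ 2) := by
  rw [stageDefect, dotProduct_sub, dotProduct_smul, smul_eq_mul]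

theorem stageDefect_apply_eq_zero {i : ι} (ha : a i = 0) (hc : c i = 0) :
    stageDefect a c i = 0 := by
  simp [stageDefect, mulVec, ha, hc]

theorem eq_zero_of_stageDefect_eq_zero [LinearOrder ι] (h2 : (2 : K) ≠ 0)
    (hexp : ∀ i j, i ≤ j → a i j = 0) (hw : stageDefect a c = 0) : c = 0 := by
  ext i
  induction i using WellFoundedLT.induction with
  | ind i ih =>
    have hac : ∑ j, a i j * c j = 0 := Finset.sum_eq_zero fun j _ => by
      rcases lt_or_ge j i with hji | hij
      · rw [ih j hji, Pi.zero_apply, mul_zero]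
      · rw [hexp i j hij, zero_mul]
    simpa [stageDefect, mulVec, dotProduct, hac, h2] using congrFun hw i

/-- The classical conditions for the Runge–Kutta method with coefficients `a`, weights `b` and
nodes `c` to have order four, one for each rooted tree with at most four vertices. All the
denominators divide `24`, so requiring `24 ≠ 0` keeps the fractions meaningful over any field. -/
structure IsOrderFour (a : Matrix ι ι K) (b c : ι → K) : Prop where
  twentyFour_ne_zero : (24 : K) ≠ 0
  mulVec_one : a *ᵥ 1 = c
  dotProduct_one : b ⬝ᵥ 1 = 1
  dotProduct_nodes : b ⬝ᵥ c = 1 / 2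
  dotProduct_nodes_sq : b ⬝ᵥ c ^ 2 = 1 / 3
  dotProduct_nodes_cube : b ⬝ᵥ c ^ 3 = 1 / 4
  dotProduct_mulVec_nodes : b ⬝ᵥ a *ᵥ c = 1 / 6
  dotProduct_nodes_mul_mulVec_nodes : b ⬝ᵥ (c * a *ᵥ c) = 1 / 8
  dotProduct_mulVec_nodes_sq : b ⬝ᵥ a *ᵥ c ^ 2 = 1 / 12
  dotProduct_mulVec_mulVec_nodes : b ⬝ᵥ a *ᵥ a *ᵥ c = 1 / 24

namespace IsOrderFour

theorem dotProduct_stageDefect_eq_zero (h : IsOrderFour a b c) : b ⬝ᵥ stageDefect a c = 0 := by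
  rw [dotProduct_stageDefect, h.dotProduct_mulVec_nodes, h.dotProduct_nodes_sq]
  grind [h.twentyFour_ne_zero]

theorem dotProduct_nodes_mul_stageDefect_eq_zero (h : IsOrderFour a b c) :
    b ⬝ᵥ (c * stageDefect a c) = 0 := by
  rw [← mul_dotProduct_eq_dotProduct_mul, dotProduct_stageDefect,
    mul_dotProduct_eq_dotProduct_mul, mul_dotProduct_eq_dotProduct_mul, ← pow_succ',
    h.dotProduct_nodes_mul_mulVec_nodes, h.dotProduct_nodes_cube]
  grind [h.twentyFour_ne_zero]

theorem adjointDefect_dotProduct_one (h : IsOrderFour a b c) : adjointDefect a b c ⬝ᵥ 1 = 0 := by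
  rw [adjointDefect_dotProduct, h.mulVec_one, mul_one, h.dotProduct_nodes, h.dotProduct_one]
  grind [h.twentyFour_ne_zero]

theorem adjointDefect_dotProduct_nodes (h : IsOrderFour a b c) :
    adjointDefect a b c ⬝ᵥ c = 0 := by
  rw [adjointDefect_dotProduct, ← pow_two, h.dotProduct_mulVec_nodes, h.dotProduct_nodes,
    h.dotProduct_nodes_sq]
  grind [h.twentyFour_ne_zero]

theorem adjointDefect_dotProduct_nodes_sq (h : IsOrderFour a b c) :
    adjointDefect a b c ⬝ᵥ c ^ 2 = 0 := by
  rw [adjointDefect_dotProduct, ← pow_succ', h.dotProduct_mulVec_nodes_sq, h.dotProduct_nodes_sq,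
    h.dotProduct_nodes_cube]
  grind [h.twentyFour_ne_zero]

theorem adjointDefect_dotProduct_stageDefect (h : IsOrderFour a b c) :
    adjointDefect a b c ⬝ᵥ stageDefect a c = 0 := by
  rw [dotProduct_stageDefect, h.adjointDefect_dotProduct_nodes_sq, adjointDefect_dotProduct,
    h.dotProduct_mulVec_mulVec_nodes, h.dotProduct_mulVec_nodes,
    h.dotProduct_nodes_mul_mulVec_nodes]
  grind [h.twentyFour_ne_zero]

theorem stageDefect_ne_zero [LinearOrder ι] (h : IsOrderFour a b c)
    (hexp : ∀ i j, i ≤ j → a i j = 0) : stageDefect a c ≠ 0 := by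
  intro hw
  have h2 : (2 : K) ≠ 0 := by grind [h.twentyFour_ne_zero]
  have hbc := h.dotProduct_nodes
  rw [eq_zero_of_stageDefect_eq_zero h2 hexp hw, dotProduct_zero] at hbc
  exact one_div_ne_zero h2 hbc.symm

theorem nodes_apply_eq_zero (h : IsOrderFour a b c) {i : ι} (ha : a i = 0) : c i = 0 := by
  rw [← h.mulVec_one, mulVec, ha, zero_dotProduct]

theorem linearIndependent_nodes_stageDefect (h : IsOrderFour a b c) {i₀ : ι} (ha : a i₀ = 0)
    (hw : stageDefect a c ≠ 0) : LinearIndependent K ![1, c, c ^ 2, stageDefect a c] := by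
  rw [Fintype.linearIndependent_iff]
  intro g hg
  replace hg : g 0 • 1 + g 1 • c + g 2 • c ^ 2 + g 3 • stageDefect a c = 0 := by
    simpa [Fin.sum_univ_four] using hg
  have hc₀ := h.nodes_apply_eq_zero ha
  have hg0 : g 0 = 0 := by
    simpa [hc₀, stageDefect_apply_eq_zero ha hc₀] using congrFun hg i₀
  rw [hg0, zero_smul, zero_add] at hg
  have hb : g 1 * (1 / 2) + g 2 * (1 / 3) = 0 := by
    simpa only [dotProduct_add, dotProduct_smul, dotProduct_zero, smul_eq_mul, h.dotProduct_nodes,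
      h.dotProduct_nodes_sq, h.dotProduct_stageDefect_eq_zero, mul_zero, add_zero]
      using congrArg (b ⬝ᵥ ·) hg
  have hbc : g 1 * (1 / 3) + g 2 * (1 / 4) = 0 := by
    simpa only [mul_add, mul_smul_comm, ← pow_two, ← pow_succ', dotProduct_add, dotProduct_smul,
      mul_zero, dotProduct_zero, smul_eq_mul, h.dotProduct_nodes_sq, h.dotProduct_nodes_cube,
      h.dotProduct_nodes_mul_stageDefect_eq_zero, add_zero]
      using congrArg (fun v => b ⬝ᵥ (c * v)) hg
  have hg1 : g 1 = 0 := by grind [h.twentyFour_ne_zero]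
  have hg2 : g 2 = 0 := by grind [h.twentyFour_ne_zero]
  have hg3 : g 3 = 0 := by simpa [hg1, hg2, hw] using hg
  simp [Fin.forall_fin_succ, hg0, hg1, hg2, hg3]

theorem adjointDefect_eq_zero (h : IsOrderFour a b c) (hι : Fintype.card ι = 4) {i₀ : ι}
    (ha : a i₀ = 0) (hw : stageDefect a c ≠ 0) : adjointDefect a b c = 0 := by
  have hspan := (h.linearIndependent_nodes_stageDefect ha hw).span_eq_top_of_card_eq_finrank'
    (by rw [Module.finrank_fintype_fun_eq_card, hι, Fintype.card_fin])
  refine eq_zero_of_dotProduct_eq_zero_of_span_eq_top hspan ?_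
  simp [h.adjointDefect_dotProduct_one, h.adjointDefect_dotProduct_nodes,
    h.adjointDefect_dotProduct_nodes_sq, h.adjointDefect_dotProduct_stageDefect]

end IsOrderFour

end RungeKutta

open RungeKutta

theorem stmt_4_general {K : Type*} [Field K] {a : Matrix (Fin 4) (Fin 4) K} {b c : Fin 4 → K}
    (hexp : ∀ i j, i ≤ j → a i j = 0) (h : IsOrderFour a b c) : b ᵥ* a = b * (1 - c) :=
  sub_eq_zero.mp <| h.adjointDefect_eq_zero (Fintype.card_fin 4)
    (funext fun j => hexp 0 j (Fin.zero_le j)) (h.stageDefect_ne_zero hexp)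

/-- Butcher's fact: any 4-stage explicit Runge–Kutta method satisfying the
classical fourth-order conditions automatically satisfies the simplifying
assumption `Σ_j b_j·a_{ji} = b_i·(1 − c_i)` for every `i`. -/
theorem stmt_4 (a : Fin 4 → Fin 4 → ℝ) (b c : Fin 4 → ℝ)
    (hexp : ∀ i j : Fin 4, i ≤ j → a i j = 0)
    (hb : ∀ i, b i ≠ 0)
    (hcdef : ∀ i, c i = ∑ j, a i j)
    (o1 : ∑ i, b i = 1)
    (o2 : ∑ i, b i * c i = 1 / 2)
    (o3 : ∑ i, b i * c i ^ 2 = 1 / 3)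
    (o4 : ∑ i, b i * c i ^ 3 = 1 / 4)
    (o5 : ∑ i, ∑ j, b i * a i j * c j = 1 / 6)
    (o6 : ∑ i, ∑ j, b i * c i * a i j * c j = 1 / 8)
    (o7 : ∑ i, ∑ j, b i * a i j * c j ^ 2 = 1 / 12)
    (o8 : ∑ i, ∑ j, ∑ k, b i * a i j * a j k * c k = 1 / 24) :
    ∀ i, ∑ j, b j * a j i = b i * (1 - c i) := by
  have h : IsOrderFour a b c :=
    { twentyFour_ne_zero := by norm_num
      mulVec_one := funext fun i => (dotProduct_one (a i)).trans (hcdef i).symm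
      dotProduct_one := (dotProduct_one b).trans o1
      dotProduct_nodes := o2
      dotProduct_nodes_sq := o3
      dotProduct_nodes_cube := o4
      dotProduct_mulVec_nodes := (dot_mulVec_eq_sum_sum b a c).trans (Finset.sum_comm.trans o5)
      dotProduct_nodes_mul_mulVec_nodes := by
        rw [← mul_dotProduct_eq_dotProduct_mul]
        exact (dot_mulVec_eq_sum_sum (b * c) a c).trans (Finset.sum_comm.trans o6)
      dotProduct_mulVec_nodes_sq :=
        (dot_mulVec_eq_sum_sum b a (c ^ 2)).trans (Finset.sum_comm.trans o7)
      dotProduct_mulVec_mulVec_nodes := by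
        simpa only [dotProduct, mulVec, Finset.mul_sum, mul_assoc] using o8 }
  exact congrFun (stmt_4_general hexp h)
end

section
/- Let s, n be positive integers and a_{ij} (1 ≤ i,j ≤ s) explicit Runge–Kutta coefficients (a_{ij} = 0 for j ≥ i) with c_i = Σ_j a_{ij}. Fix i ∈ {1,...,s}. Suppose that for every dimension d, every C^∞ function f : ℝ^d → ℝ^d that is globally Lipschitz, and every initial condition y(t_0) = y_0 of y' = f(y), there exist C > 0 and h_0 > 0 with ‖y(t_0 + c_i·h) − y_i(h)‖ ≤ C·h^n for all h ∈ (0, h_0], where y_i(h) is the i-th internal stage y_j(h) = y_0 + h·Σ_{k<j} a_{jk}·f(y_k(h)). Then the order conditions Σ_{j=1}^s a_{ij}·c_j^{l−2} = c_i^{l−1}/(l−1) must hold for every l = 2, ..., n. -/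
/-!
Order conditions for internal stages are detected by quadrature problems. The planar field
`(x, z) ↦ (1, φ x)` has the solution `t ↦ (t, ∫₀ᵗ φ)`, while the second component of its `j`-th
stage is the quadrature sum `h ∑ₖ a_{jk} φ (c_k h)`. For `φ x = x ^ m` the error of the `i`-th stage
is exactly `(c_i ^ (m + 1) / (m + 1) - ∑ₖ a_{ik} c_k ^ m) h ^ (m + 1)`, which can be `O(h ^ n)` with
`n > m + 1` only if the bracket vanishes. Monomials are not globally Lipschitz, but only the germ of
`φ` at `0` matters as `h → 0`, so they may be cut off away from the origin.
-/

open Filter Topology Asymptotics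

section Germs

lemma exists_contDiff_lipschitzWith_eventuallyEq {E F : Type*} [NormedAddCommGroup E]
    [NormedSpace ℝ E] [FiniteDimensional ℝ E] [NormedAddCommGroup F] [NormedSpace ℝ F] {n : ℕ∞}
    (hn : n ≠ 0) {g : E → F} (hg : ContDiff ℝ n g) (x : E) :
    ∃ φ : E → F, ContDiff ℝ n φ ∧ (∃ L, LipschitzWith L φ) ∧ φ =ᶠ[𝓝 x] g := by
  let χ : ContDiffBump x := default
  have hsmooth : ContDiff ℝ n (fun y => χ y • g y) := χ.contDiff.smul hg
  have hsupport : HasCompactSupport (fun y => χ y • g y) := χ.hasCompactSupport.smul_right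
  refine ⟨_, hsmooth, hsmooth.lipschitzWith_of_hasCompactSupport hsupport (mod_cast hn), ?_⟩
  filter_upwards [χ.eventuallyEq_one] with y hy
  simp [hy]

lemma eventuallyEq_intervalIntegral {F : Type*} [NormedAddCommGroup F] [NormedSpace ℝ F]
    {f g : ℝ → F} {a : ℝ} (hfg : f =ᶠ[𝓝 a] g) :
    (fun t => ∫ x in a..t, f x) =ᶠ[𝓝 a] fun t => ∫ x in a..t, g x := by
  have huIcc : Tendsto (fun t => Set.uIcc a t) (𝓝 a) (𝓝 a).smallSets :=
    tendsto_const_nhds.uIcc tendsto_id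
  filter_upwards [huIcc.eventually hfg.smallSets] with t ht
  exact intervalIntegral.integral_congr ht

lemma eq_zero_of_const_mul_pow_isBigO {D : ℝ} {m n : ℕ} (hmn : m < n)
    (hD : (fun h : ℝ => D * h ^ m) =O[𝓝[>] 0] fun h => h ^ n) : D = 0 := by
  have hlittle : (fun h : ℝ => D * h ^ m) =o[𝓝[>] 0] fun h => h ^ m :=
    hD.trans_isLittleO ((isLittleO_pow_pow hmn).mono nhdsWithin_le_nhds)
  by_contra hne
  have hpos : ∀ᶠ h : ℝ in 𝓝[>] 0, h ^ m ≠ 0 := by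
    filter_upwards [self_mem_nhdsWithin] with h hh using pow_ne_zero m (ne_of_gt hh)
  exact isLittleO_irrefl hpos.frequently ((isLittleO_const_mul_left_iff hne).1 hlittle)

lemma isBigO_pow_of_forall_mem_Ioc {E : Type*} [NormedAddCommGroup E] {u : ℝ → E} {n : ℕ}
    (hu : ∃ C > 0, ∃ h₀ > 0, ∀ h ∈ Set.Ioc (0 : ℝ) h₀, ‖u h‖ ≤ C * h ^ n) :
    u =O[𝓝[>] 0] fun h => h ^ n := by
  obtain ⟨C, -, h₀, hh₀, hbound⟩ := hu
  refine IsBigO.of_bound C ?_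
  filter_upwards [Ioc_mem_nhdsGT hh₀] with h hh
  simpa [abs_of_pos hh.1] using hbound h hh

end Germs

section Stages

variable {ι : Type*} [Fintype ι] {E : Type*} [NormedAddCommGroup E] [NormedSpace ℝ E]

/-- `Y` is a family of internal stages, for the step `h` from `y₀`, of the Runge–Kutta method with
coefficients `a` applied to `y' = f y`. The method may be implicit. -/
def IsRungeKuttaStages (a : ι → ι → ℝ) (f : E → E) (y₀ : E) (h : ℝ) (Y : ι → E) : Prop :=
  ∀ j, Y j = y₀ + h • ∑ k, a j k • f (Y k)

variable (E) in
/-- The `i`-th internal stage of the Runge–Kutta method with coefficients `a` and nodes `c`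
approximates solutions in `E` to order `n`, in the sense of an `O(h ^ n)` error as `h ↓ 0`. The
stages are families defined for every step size, and nothing is required of a field that has
none. -/
def HasStageOrder (a : ι → ι → ℝ) (c : ι → ℝ) (i : ι) (n : ℕ) : Prop :=
  ∀ f : E → E, ContDiff ℝ (⊤ : ℕ∞) f → (∃ L, LipschitzWith L f) →
    ∀ (t₀ : ℝ) (y : ℝ → E), (∀ t, HasDerivAt y (f (y t)) t) →
      ∀ Y : ℝ → ι → E, (∀ h, IsRungeKuttaStages a f (y t₀) h (Y h)) →
        (fun h => y (t₀ + c i * h) - Y h i) =O[𝓝[>] 0] fun h => h ^ n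

lemma isRungeKuttaStages_iff_of_explicit [LinearOrder ι] {a : ι → ι → ℝ}
    (hexp : ∀ i j, i ≤ j → a i j = 0) {f : E → E} {y₀ : E} {h : ℝ} {Y : ι → E} :
    IsRungeKuttaStages a f y₀ h Y ↔
      ∀ j, Y j = y₀ + h • ∑ k ∈ Finset.univ.filter (fun k => k < j), a j k • f (Y k) := by
  refine forall_congr' fun j => ?_
  rw [Finset.sum_filter_of_ne]
  intro k _ hk
  contrapose! hk
  rw [hexp j k hk, zero_smul]

end Stages

section QuadratureField

/-- The planar vector field `(x, z) ↦ (1, φ x)`, whose flow integrates `φ`. -/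
noncomputable def quadratureField (φ : ℝ → ℝ) (v : EuclideanSpace ℝ (Fin 2)) :
    EuclideanSpace ℝ (Fin 2) :=
  !₂[1, φ (v 0)]

variable {φ : ℝ → ℝ}

lemma contDiff_quadratureField {n : WithTop ℕ∞} (hφ : ContDiff ℝ n φ) :
    ContDiff ℝ n (quadratureField φ) := by
  refine contDiff_euclidean.2 fun j => ?_
  fin_cases j
  · exact contDiff_const
  · exact hφ.comp (contDiff_piLp_apply 2)

lemma lipschitzWith_quadratureField {L : NNReal} (hφ : LipschitzWith L φ) :
    LipschitzWith L (quadratureField φ) := by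
  refine LipschitzWith.of_dist_le_mul fun v w => ?_
  calc dist (quadratureField φ v) (quadratureField φ w) = dist (φ (v 0)) (φ (w 0)) := by
        simp [EuclideanSpace.dist_eq, quadratureField, Real.sqrt_sq dist_nonneg]
    _ ≤ L * dist (v 0) (w 0) := hφ.dist_le_mul _ _
    _ ≤ L * dist v w := by
        gcongr
        simpa [dist_eq_norm] using PiLp.norm_apply_le (v - w) 0

lemma hasDerivAt_quadratureField_solution (hφ : Continuous φ) (t : ℝ) :
    HasDerivAt (fun t : ℝ => !₂[t, ∫ x in (0 : ℝ)..t, φ x])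
      (quadratureField φ !₂[t, ∫ x in (0 : ℝ)..t, φ x]) t := by
  have hcoord : HasDerivAt (fun t : ℝ => ![t, ∫ x in (0 : ℝ)..t, φ x]) ![1, φ t] t := by
    refine hasDerivAt_pi.2 fun j => ?_
    fin_cases j
    · exact hasDerivAt_id t
    · exact (hφ.integral_hasStrictDerivAt 0 t).hasDerivAt
  exact (PiLp.hasFDerivAt_toLp (𝕜 := ℝ) 2 _).comp_hasDerivAt t hcoord

lemma isRungeKuttaStages_quadratureField {ι : Type*} [Fintype ι] {a : ι → ι → ℝ} {c : ι → ℝ}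
    (hc : ∀ j, c j = ∑ k, a j k) (φ : ℝ → ℝ) (h : ℝ) :
    IsRungeKuttaStages a (quadratureField φ) 0 h
      fun j => !₂[c j * h, h * ∑ k, a j k * φ (c k * h)] := by
  intro j
  ext r
  fin_cases r
  · simp [quadratureField, hc j, mul_comm]
  · simp [quadratureField]

end QuadratureField

section QuadratureDefect

variable {ι : Type*} [Fintype ι]

/-- The error, on the interval from `0` to `x * h`, of the quadrature rule with weights `h * b k`
and nodes `c k * h` applied to `φ`. For `b = a i` and `x = c i` it is the error of the `i`-th
internal stage on `quadratureField φ`. -/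
noncomputable def quadratureDefect (b c : ι → ℝ) (x : ℝ) (φ : ℝ → ℝ) (h : ℝ) : ℝ :=
  (∫ t in (0 : ℝ)..x * h, φ t) - h * ∑ k, b k * φ (c k * h)

lemma quadratureDefect_eventuallyEq (b c : ι → ℝ) (x : ℝ) {φ ψ : ℝ → ℝ} (hφψ : φ =ᶠ[𝓝 0] ψ) :
    quadratureDefect b c x φ =ᶠ[𝓝 0] quadratureDefect b c x ψ := by
  have hscale (r : ℝ) : Tendsto (fun h => r * h) (𝓝 0) (𝓝 0) :=
    (continuous_const_mul r).tendsto' 0 0 (mul_zero r)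
  have hnodes : ∀ᶠ h in 𝓝 0, ∀ k, φ (c k * h) = ψ (c k * h) :=
    eventually_all.2 fun k => (hscale (c k)).eventually hφψ
  filter_upwards [(hscale x).eventually (eventuallyEq_intervalIntegral hφψ), hnodes]
    with h hintegral hvalues
  simp only [quadratureDefect, hintegral, hvalues]

lemma quadratureDefect_pow (b c : ι → ℝ) (x : ℝ) (m : ℕ) (h : ℝ) :
    quadratureDefect b c x (fun t => t ^ m) h =
      (x ^ (m + 1) / (m + 1) - ∑ k, b k * c k ^ m) * h ^ (m + 1) := by
  have hsum : h * ∑ k, b k * (c k * h) ^ m = (∑ k, b k * c k ^ m) * h ^ (m + 1) := by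
    rw [Finset.mul_sum, Finset.sum_mul]
    exact Finset.sum_congr rfl fun k _ => by ring
  rw [quadratureDefect, integral_pow, hsum]
  ring

lemma HasStageOrder.quadratureDefect_isBigO {a : ι → ι → ℝ} {c : ι → ℝ}
    (hc : ∀ j, c j = ∑ k, a j k) {i : ι} {n : ℕ}
    (H : HasStageOrder (EuclideanSpace ℝ (Fin 2)) a c i n) {g : ℝ → ℝ}
    (hg : ContDiff ℝ (⊤ : ℕ∞) g) :
    quadratureDefect (a i) c (c i) g =O[𝓝[>] 0] fun h => h ^ n := by
  obtain ⟨φ, hφ, ⟨L, hL⟩, hφg⟩ :=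
    exists_contDiff_lipschitzWith_eventuallyEq ENat.top_ne_zero hg 0
  have hstart : (!₂[0, ∫ x in (0 : ℝ)..0, φ x] : EuclideanSpace ℝ (Fin 2)) = 0 := by
    ext j
    fin_cases j <;> simp
  have herror := H (quadratureField φ) (contDiff_quadratureField hφ)
    ⟨L, lipschitzWith_quadratureField hL⟩ 0 _
    (hasDerivAt_quadratureField_solution hφ.continuous) _
    fun h => hstart ▸ isRungeKuttaStages_quadratureField hc φ h
  have hdefect : quadratureDefect (a i) c (c i) φ =O[𝓝[>] 0] fun h => h ^ n := by
    refine (isBigO_of_le _ fun h => ?_).trans herror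
    simpa [quadratureDefect] using PiLp.norm_apply_le
      (!₂[0 + c i * h, ∫ x in (0 : ℝ)..0 + c i * h, φ x] -
        !₂[c i * h, h * ∑ k, a i k * φ (c k * h)]) 1
  exact hdefect.congr' ((quadratureDefect_eventuallyEq _ _ _ hφg).filter_mono nhdsWithin_le_nhds)
    .rfl

end QuadratureDefect

theorem stmt_6_general {ι : Type*} [Fintype ι] {a : ι → ι → ℝ} {c : ι → ℝ}
    (hc : ∀ j, c j = ∑ k, a j k) {i : ι} {n : ℕ}
    (H : HasStageOrder (EuclideanSpace ℝ (Fin 2)) a c i n) (l : ℕ) (hl : 2 ≤ l) (hln : l ≤ n) :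
    ∑ j, a i j * c j ^ (l - 2) = c i ^ (l - 1) / ((l : ℝ) - 1) := by
  obtain ⟨m, rfl⟩ := Nat.exists_eq_add_of_le' hl
  have hdefect := H.quadratureDefect_isBigO hc (contDiff_id.pow m)
  have hcoeff : c i ^ (m + 1) / ((m : ℝ) + 1) - ∑ k, a i k * c k ^ m = 0 :=
    eq_zero_of_const_mul_pow_isBigO hln (hdefect.congr_left (quadratureDefect_pow _ _ _ m))
  have hcast : ((m + 2 : ℕ) : ℝ) - 1 = m + 1 := by
    push_cast
    ring
  rw [hcast]
  exact (sub_eq_zero.1 hcoeff).symm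

/-- Necessity direction of Lemma 3.3: if for every smooth globally Lipschitz
vector field and every initial condition the `i`-th internal stage of an
explicit Runge–Kutta method approximates the exact solution at `t_0 + c_i·h`
to order `n`, then the simplifying conditions
`Σ_j a_{ij} c_j^{l−2} = c_i^{l−1}/(l−1)` must hold for `l = 2,…,n`. -/
theorem stmt_6 (s n : ℕ) (hs : 0 < s) (hn : 0 < n)
    (a : Fin s → Fin s → ℝ) (hexp : ∀ i j : Fin s, i ≤ j → a i j = 0)
    (c : Fin s → ℝ) (hc : ∀ i, c i = ∑ j, a i j)
    (i : Fin s)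
    (H : ∀ d : ℕ, 0 < d →
      ∀ f : EuclideanSpace ℝ (Fin d) → EuclideanSpace ℝ (Fin d),
      ContDiff ℝ (⊤ : ℕ∞) f → (∃ L : NNReal, LipschitzWith L f) →
      ∀ (t0 : ℝ) (y0 : EuclideanSpace ℝ (Fin d))
        (y : ℝ → EuclideanSpace ℝ (Fin d)),
      y t0 = y0 → (∀ t, HasDerivAt y (f (y t)) t) →
      ∀ ystage : ℝ → Fin s → EuclideanSpace ℝ (Fin d),
      (∀ (h : ℝ) (j : Fin s), ystage h j =
        y0 + h • ∑ k ∈ Finset.univ.filter (fun k => k < j), a j k • f (ystage h k)) →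
      ∃ C > 0, ∃ h0 > 0, ∀ h ∈ Set.Ioc (0 : ℝ) h0,
        ‖y (t0 + c i * h) - ystage h i‖ ≤ C * h ^ n) :
    ∀ l : ℕ, 2 ≤ l → l ≤ n →
      ∑ j, a i j * c j ^ (l - 2) = c i ^ (l - 1) / ((l : ℝ) - 1) := by
  exact stmt_6_general hc fun f hf hL t₀ y hy Y hY =>
    isBigO_pow_of_forall_mem_Ioc <| H 2 two_pos f hf hL t₀ _ y rfl hy Y fun h =>
      (isRungeKuttaStages_iff_of_explicit hexp).1 (hY h)
end

section
/- Let Q be a symmetric positive semidefinite p×p real matrix, R a symmetric positive definite q×q real matrix, M a symmetric positive semidefinite n×n real matrix, E ∈ ℝ^{p×n}, F ∈ ℝ^{p×q}, G ∈ ℝ^{n×n}, H ∈ ℝ^{n×q}, and set L = −(FᵀQF + R + HᵀMH)⁻¹(FᵀQE + HᵀMG) and M₋ = (E + FL)ᵀQ(E + FL) + LᵀRL + (G + HL)ᵀM(G + HL). Then M₋ is symmetric positive semidefinite and, for every x ∈ ℝ^n, min over U ∈ ℝ^q of ½(Ex + FU)ᵀQ(Ex + FU) + ½UᵀRU + ½(Gx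 + HU)ᵀM(Gx + HU) equals ½xᵀM₋x. -/
open Matrix

/-!
Each of the three costs is a quadratic form evaluated at a vector `A x + B U`, hence a block
quadratic form in the pair `(U, x)`. Their sum is the form with blocks `W = FᵀQF + R + HᵀMH`,
`N = FᵀQE + HᵀMG`, `Nᵀ` and `P = EᵀQE + GᵀMG`. Completing the square with the Schur complement
of `W` shows that `U = -W⁻¹N x = L x` is a minimizer, and substituting it back into the three
costs gives `½ xᵀM₋x`, so that `M₋` never has to be compared with `P - NᵀW⁻¹N`.
-/

/-- The quadratic (over a field with conjugation: Hermitian) form `v ↦ vᴴ S v` of a square matrix,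
in which all costs are expressed. -/
def quadForm {n α : Type*} [Fintype n] [NonUnitalSemiring α] [Star α] (S : Matrix n n α)
    (v : n → α) : α :=
  star v ⬝ᵥ (S *ᵥ v)

section QuadForm

variable {m n p α : Type*} [Fintype m] [Fintype n] [Fintype p]

theorem quadForm_add [NonUnitalSemiring α] [Star α] (S T : Matrix n n α) (v : n → α) :
    quadForm (S + T) v = quadForm S v + quadForm T v := by
  simp only [quadForm, add_mulVec, dotProduct_add]

theorem quadForm_conjTranspose_mul_mul [NonUnitalSemiring α] [StarRing α]
    (A : Matrix p n α) (S : Matrix p p α) (x : n → α) :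
    quadForm (Aᴴ * S * A) x = quadForm S (A *ᵥ x) := by
  simp only [quadForm, ← mulVec_mulVec, dotProduct_mulVec, star_mulVec]

theorem quadForm_mulVec_add_mulVec [Semiring α] [StarRing α]
    {S : Matrix p p α} (hS : S.IsHermitian) (A : Matrix p n α) (B : Matrix p m α)
    (x : n → α) (u : m → α) :
    quadForm S (A *ᵥ x + B *ᵥ u) =
      quadForm (fromBlocks (Bᴴ * S * B) (Bᴴ * S * A) (Bᴴ * S * A)ᴴ (Aᴴ * S * A)) (u ⊕ᵥ x) := by
  have hblocks : fromBlocks (Bᴴ * S * B) (Bᴴ * S * A) (Bᴴ * S * A)ᴴ (Aᴴ * S * A) =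
      (fromCols B A)ᴴ * S * fromCols B A := by
    simp only [conjTranspose_fromCols_eq_fromRows_conjTranspose, mul_fromCols,
      fromRows_mul, fromCols_fromRows_eq_fromBlocks, conjTranspose_mul,
      conjTranspose_conjTranspose, hS.eq, Matrix.mul_assoc]
  rw [hblocks, quadForm_conjTranspose_mul_mul, fromCols_mulVec, Sum.elim_comp_inl,
    Sum.elim_comp_inr, add_comm]

theorem quadForm_fromBlocks_eq_add_schur [CommRing α] [StarRing α] [DecidableEq m]
    {W : Matrix m m α} (hW : W.IsHermitian) (hWu : IsUnit W) (N : Matrix m n α)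
    (P : Matrix n n α) (u : m → α) (x : n → α) :
    quadForm (fromBlocks W N Nᴴ P) (u ⊕ᵥ x) =
      quadForm W (u + (W⁻¹ * N) *ᵥ x) + quadForm (P - Nᴴ * W⁻¹ * N) x := by
  have := hWu.invertible
  simp only [quadForm, dotProduct_mulVec, schur_complement_eq₁₁ N P u x hW]

theorem isMinOn_quadForm_fromBlocks [CommRing α] [PartialOrder α] [StarRing α] [AddLeftMono α]
    [DecidableEq m] {W : Matrix m m α} (hW : W.PosSemidef) (hWu : IsUnit W)
    (N : Matrix m n α) (P : Matrix n n α) (x : n → α) :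
    IsMinOn (fun u ↦ quadForm (fromBlocks W N Nᴴ P) (u ⊕ᵥ x)) Set.univ (-(W⁻¹ * N) *ᵥ x) := by
  refine isMinOn_univ_iff.2 fun u ↦ ?_
  have square_vanishes : quadForm W (-(W⁻¹ * N) *ᵥ x + (W⁻¹ * N) *ᵥ x) = 0 := by
    rw [neg_mulVec, neg_add_cancel, quadForm, mulVec_zero, dotProduct_zero]
  simp only [quadForm_fromBlocks_eq_add_schur hW.isHermitian hWu]
  gcongr
  exact square_vanishes.trans_le (hW.dotProduct_mulVec_nonneg _)

end QuadForm

theorem one_half_nonneg_of_starOrderedRing (𝕜 : Type*) [Field 𝕜] [PartialOrder 𝕜] [StarRing 𝕜]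
    [StarOrderedRing 𝕜] : (0 : 𝕜) ≤ 1 / 2 := by
  have h := add_nonneg (star_mul_self_nonneg (1 / 2 : 𝕜)) (star_mul_self_nonneg (1 / 2 : 𝕜))
  rwa [star_div₀, star_one, star_ofNat, ← mul_add, add_halves, mul_one] at h

section Riccati

variable {m n p q α : Type*} [Fintype m] [Fintype n] [Fintype p] [Fintype q]

theorem quadForm_residuals_eq_quadForm_fromBlocks [Semiring α] [StarRing α]
    {Q : Matrix p p α} (hQ : Q.IsHermitian) {R : Matrix q q α} (hR : R.IsHermitian)
    {M : Matrix m m α} (hM : M.IsHermitian) (E : Matrix p n α) (F : Matrix p q α)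
    (G : Matrix m n α) (H : Matrix m q α) (x : n → α) (U : q → α) :
    quadForm Q (E *ᵥ x + F *ᵥ U) + quadForm R U + quadForm M (G *ᵥ x + H *ᵥ U) =
      quadForm (fromBlocks (Fᴴ * Q * F + R + Hᴴ * M * H) (Fᴴ * Q * E + Hᴴ * M * G)
        (Fᴴ * Q * E + Hᴴ * M * G)ᴴ (Eᴴ * Q * E + Gᴴ * M * G)) (U ⊕ᵥ x) := by
  classical
  have hRU : quadForm R U = quadForm (fromBlocks R 0 0 0) (U ⊕ᵥ x) := by
    simpa only [zero_mulVec, one_mulVec, zero_add, conjTranspose_one, Matrix.one_mul,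
      Matrix.mul_one, Matrix.mul_zero, conjTranspose_zero] using
      quadForm_mulVec_add_mulVec hR (0 : Matrix q n α) 1 x U
  rw [quadForm_mulVec_add_mulVec hQ, hRU, quadForm_mulVec_add_mulVec hM, ← quadForm_add,
    ← quadForm_add, fromBlocks_add, fromBlocks_add, conjTranspose_add]
  simp only [add_zero]

theorem stmt_12_general {𝕜 : Type*} [Field 𝕜] [PartialOrder 𝕜] [StarRing 𝕜] [StarOrderedRing 𝕜]
    [DecidableEq q]
    {Q : Matrix p p 𝕜} (hQ : Q.PosSemidef) {R : Matrix q q 𝕜} (hR : R.PosSemidef)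
    {M : Matrix m m 𝕜} (hM : M.PosSemidef) {E : Matrix p n 𝕜} {F : Matrix p q 𝕜}
    {G : Matrix m n 𝕜} {H : Matrix m q 𝕜} (hW : IsUnit (Fᴴ * Q * F + R + Hᴴ * M * H))
    {L : Matrix q n 𝕜}
    (hL : L = -((Fᴴ * Q * F + R + Hᴴ * M * H)⁻¹ * (Fᴴ * Q * E + Hᴴ * M * G)))
    {Mm : Matrix n n 𝕜}
    (hMm : Mm = (E + F * L)ᴴ * Q * (E + F * L) + Lᴴ * R * L + (G + H * L)ᴴ * M * (G + H * L))
    {V : (n → 𝕜) → (q → 𝕜) → 𝕜}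
    (hV : ∀ x U, V x U = (1 / 2) * quadForm Q (E *ᵥ x + F *ᵥ U) + (1 / 2) * quadForm R U +
      (1 / 2) * quadForm M (G *ᵥ x + H *ᵥ U)) :
    Mm.PosSemidef ∧ ∀ x, IsLeast (Set.range (V x)) ((1 / 2) * quadForm Mm x) := by
  have value_at_gain (x : n → 𝕜) : V x (L *ᵥ x) = (1 / 2) * quadForm Mm x := by
    simp only [hV, hMm, quadForm_add, quadForm_conjTranspose_mul_mul, add_mulVec, mulVec_mulVec,
      mul_add]
  have V_eq_fromBlocks (x : n → 𝕜) (U : q → 𝕜) : V x U = (1 / 2) *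
      quadForm (fromBlocks (Fᴴ * Q * F + R + Hᴴ * M * H) (Fᴴ * Q * E + Hᴴ * M * G)
        (Fᴴ * Q * E + Hᴴ * M * G)ᴴ (Eᴴ * Q * E + Gᴴ * M * G)) (U ⊕ᵥ x) := by
    rw [hV, ← mul_add, ← mul_add, quadForm_residuals_eq_quadForm_fromBlocks
      hQ.isHermitian hR.isHermitian hM.isHermitian]
  refine ⟨?_, fun x ↦ ⟨⟨L *ᵥ x, value_at_gain x⟩, ?_⟩⟩
  · rw [hMm]
    exact ((hQ.conjTranspose_mul_mul_same _).add (hR.conjTranspose_mul_mul_same _)).add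
      (hM.conjTranspose_mul_mul_same _)
  · rintro _ ⟨U, rfl⟩
    have hW' : (Fᴴ * Q * F + R + Hᴴ * M * H).PosSemidef :=
      ((hQ.conjTranspose_mul_mul_same F).add hR).add (hM.conjTranspose_mul_mul_same H)
    rw [← value_at_gain, V_eq_fromBlocks, V_eq_fromBlocks, hL]
    exact mul_le_mul_of_nonneg_left
      (isMinOn_univ_iff.1 (isMinOn_quadForm_fromBlocks hW' hW _ _ x) U)
      (one_half_nonneg_of_starOrderedRing 𝕜)

end Riccati

/-- Riccati-type recursion of the DLQR method: with
`L = −(FᵀQF + R + HᵀMH)⁻¹(FᵀQE + HᵀMG)` and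
`M₋ = (E+FL)ᵀQ(E+FL) + LᵀRL + (G+HL)ᵀM(G+HL)`, the matrix `M₋` is symmetric
positive semidefinite and the minimum over `U` of the discrete HJB right-hand
side equals `½xᵀM₋x` for every `x`. -/
theorem stmt_12 (p q n : ℕ)
    (Q : Matrix (Fin p) (Fin p) ℝ) (hQ : Q.PosSemidef)
    (R : Matrix (Fin q) (Fin q) ℝ) (hR : R.PosDef)
    (M : Matrix (Fin n) (Fin n) ℝ) (hM : M.PosSemidef)
    (E : Matrix (Fin p) (Fin n) ℝ) (F : Matrix (Fin p) (Fin q) ℝ)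
    (G : Matrix (Fin n) (Fin n) ℝ) (H : Matrix (Fin n) (Fin q) ℝ)
    (L : Matrix (Fin q) (Fin n) ℝ)
    (hL : L = -((Fᵀ * Q * F + R + Hᵀ * M * H)⁻¹ * (Fᵀ * Q * E + Hᵀ * M * G)))
    (Mm : Matrix (Fin n) (Fin n) ℝ)
    (hMm : Mm = (E + F * L)ᵀ * Q * (E + F * L) + Lᵀ * R * L +
      (G + H * L)ᵀ * M * (G + H * L))
    (V : (Fin n → ℝ) → (Fin q → ℝ) → ℝ)
    (hV : ∀ x U, V x U =
      (1 / 2) * ((E *ᵥ x + F *ᵥ U) ⬝ᵥ (Q *ᵥ (E *ᵥ x + F *ᵥ U))) +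
      (1 / 2) * (U ⬝ᵥ (R *ᵥ U)) +
      (1 / 2) * ((G *ᵥ x + H *ᵥ U) ⬝ᵥ (M *ᵥ (G *ᵥ x + H *ᵥ U)))) :
    Mm.PosSemidef ∧
      ∀ x : Fin n → ℝ,
        IsLeast (Set.range (V x)) ((1 / 2) * (x ⬝ᵥ (Mm *ᵥ x))) := by
  have hW : (Fᵀ * Q * F + R + Hᵀ * M * H).PosDef :=
    (hR.posSemidef_add (hQ.conjTranspose_mul_mul_same F)).add_posSemidef
      (hM.conjTranspose_mul_mul_same H)
  exact stmt_12_general hQ hR.posSemidef hM hW.isUnit hL hMm hV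
end

section
/- Define g : ℝ → ℝ by g(u) = u² + 1 and j : ℝ → ℝ by j(u) = ½·g(u)² + ½·u², and define W : ℝ → ℝ by W(u) = 1 + (g'(u))². Then u* = 0 is the unique critical point and the unique global minimizer of j, and j''(u*) − W(u*) = g''(u*)·g(u*) = 2 ≠ 0. -/
/-!
The reduced cost satisfies `j' = g g' + u` and hence `j'' = g'² + g'' g + 1`, so the Gauss–Newton
matrix `W = 1 + g'²` omits exactly the curvature term `g'' g`. For `g u = u² + 1` this term is
`2` at the origin. There `|g|` is also smallest, and `g g'` has the sign of `u`, so the control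
penalty `u² / 2` makes `0` the only minimizer and the only critical point.
-/

open scoped Topology

/-- The reduced objective `j u = ½ (g u)² + ½ u²` of the scalar model problem of minimizing
`½ x² + ½ u²` subject to `x = g u`. -/
noncomputable def reducedCost (g : ℝ → ℝ) (u : ℝ) : ℝ :=
  (1 / 2) * g u ^ 2 + (1 / 2) * u ^ 2

/-- The ILQR (Gauss–Newton) approximation `1 + (g' u)²` of the second derivative of
`reducedCost g`; the `1 × 1` matrix is encoded as a real number. -/
noncomputable def ilqrMatrix (g : ℝ → ℝ) (u : ℝ) : ℝ :=
  1 + deriv g u ^ 2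

section ReducedCost

variable {g : ℝ → ℝ} {u : ℝ}

theorem hasDerivAt_reducedCost {g' : ℝ} (hg : HasDerivAt g g' u) :
    HasDerivAt (reducedCost g) (g u * g' + u) u := by
  have state_term := (hg.fun_pow 2).const_mul (1 / 2)
  have control_term := (hasDerivAt_pow 2 u).const_mul (1 / 2)
  exact (state_term.fun_add control_term).congr_deriv (by norm_num; ring)

theorem deriv_reducedCost (hg : DifferentiableAt ℝ g u) :
    deriv (reducedCost g) u = g u * deriv g u + u :=
  (hasDerivAt_reducedCost hg.hasDerivAt).deriv

theorem deriv_deriv_reducedCost (hg : ∀ᶠ v in 𝓝 u, DifferentiableAt ℝ g v)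
    (hg' : DifferentiableAt ℝ (deriv g) u) :
    deriv (deriv (reducedCost g)) u = deriv g u ^ 2 + deriv (deriv g) u * g u + 1 := by
  have deriv_eventuallyEq : deriv (reducedCost g) =ᶠ[𝓝 u] fun v ↦ g v * deriv g v + v :=
    hg.mono fun _ ↦ deriv_reducedCost
  have hasDerivAt_formula :=
    (hg.self_of_nhds.hasDerivAt.fun_mul hg'.hasDerivAt).fun_add (hasDerivAt_id' u)
  rw [deriv_eventuallyEq.deriv_eq, hasDerivAt_formula.deriv]
  ring

theorem deriv_deriv_reducedCost_sub_ilqrMatrix (hg : ∀ᶠ v in 𝓝 u, DifferentiableAt ℝ g v)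
    (hg' : DifferentiableAt ℝ (deriv g) u) :
    deriv (deriv (reducedCost g)) u - ilqrMatrix g u = deriv (deriv g) u * g u := by
  rw [deriv_deriv_reducedCost hg hg', ilqrMatrix]
  ring

theorem eq_zero_of_deriv_reducedCost_eq_zero (hg : DifferentiableAt ℝ g u)
    (h_sign : 0 ≤ u * (g u * deriv g u)) (h_crit : deriv (reducedCost g) u = 0) : u = 0 := by
  rw [deriv_reducedCost hg] at h_crit
  have h_sum : u * (g u * deriv g u) + u ^ 2 = 0 := by linear_combination u * h_crit
  have sq_eq_zero : u ^ 2 = 0 := le_antisymm (by linarith) (sq_nonneg u)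
  exact pow_eq_zero_iff two_ne_zero |>.mp sq_eq_zero

theorem reducedCost_zero_lt_of_abs_le (hg : |g 0| ≤ |g u|) (hu : u ≠ 0) :
    reducedCost g 0 < reducedCost g u := by
  have state_le : g 0 ^ 2 ≤ g u ^ 2 := sq_le_sq.mpr hg
  have control_pos : 0 < u ^ 2 := by positivity
  simp only [reducedCost]
  linarith

end ReducedCost

/-- The paper's counterexample to superlinear convergence of ILQR: with
`g(u) = u² + 1`, `j(u) = ½g(u)² + ½u²` and `W(u) = 1 + (g'(u))²`, the point
`u* = 0` is the unique critical point and unique global minimizer of `j`, and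
`j''(u*) − W(u*) = g''(u*)·g(u*) = 2 ≠ 0`. -/
theorem stmt_18 (g j W : ℝ → ℝ)
    (hg : ∀ u, g u = u ^ 2 + 1)
    (hj : ∀ u, j u = (1 / 2) * (g u) ^ 2 + (1 / 2) * u ^ 2)
    (hW : ∀ u, W u = 1 + (deriv g u) ^ 2) :
    (∀ u, deriv j u = 0 ↔ u = 0) ∧
    (∀ u, u ≠ 0 → j 0 < j u) ∧
    deriv (deriv j) 0 - W 0 = deriv (deriv g) 0 * g 0 ∧
    deriv (deriv g) 0 * g 0 = 2 ∧
    deriv (deriv j) 0 - W 0 ≠ 0 := by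
  obtain rfl : j = reducedCost g := funext hj
  obtain rfl : W = ilqrMatrix g := funext hW
  have g_diff : Differentiable ℝ g := by rw [funext hg]; fun_prop
  have deriv_g : deriv g = fun u ↦ 2 * u := by ext u; simp [funext hg]
  have curvature : deriv (deriv g) 0 * g 0 = 2 := by simp [deriv_g, hg]
  have gap : deriv (deriv (reducedCost g)) 0 - ilqrMatrix g 0 = deriv (deriv g) 0 * g 0 :=
    deriv_deriv_reducedCost_sub_ilqrMatrix (.of_forall g_diff) (by rw [deriv_g]; fun_prop)
  have sign_nonneg (u : ℝ) : 0 ≤ u * (g u * deriv g u) := by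
    have factored : u * (g u * deriv g u) = 2 * u ^ 2 * (u ^ 2 + 1) := by rw [deriv_g, hg]; ring
    rw [factored]
    positivity
  have abs_g_zero_le (u : ℝ) : |g 0| ≤ |g u| := by
    rw [hg, hg]
    exact abs_le_abs_of_nonneg (by norm_num) (by nlinarith)
  refine ⟨fun u ↦ ⟨eq_zero_of_deriv_reducedCost_eq_zero (g_diff u) (sign_nonneg u), ?_⟩,
    fun u ↦ reducedCost_zero_lt_of_abs_le (abs_g_zero_le u), gap, curvature,
    by simp [gap, curvature]⟩
  rintro rfl
  simp [deriv_reducedCost (g_diff 0), deriv_g]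
end
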